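/- Let Δ₁ ⊆ V₁ and Δ₂ ⊆ V₂ be subspaces, Ω₁ and Ω₂ skew-symmetric bilinear forms on V₁ and V₂ respectively, and Δ_c ⊆ V₁ × V₂ a subspace. Then the interconnection of the induced Dirac structures D(Δ₁,Ω₁) and D(Δ₂,Ω₂) through the interconnection Dirac structure D_int = Δ_c × Δ_c° satisfies (D(Δ₁,Ω₁) ⊕ D(Δ₂,Ω₂)) ⋈ D_int = D((Δ₁ × Δ₂) ∩ Δ_c, Ω₁ ⊕ Ω₂), where Ω₁ ⊕ Ω₂ is the skew-symmetric bilinear form on V₁ × V₂ given by (Ω₁ ⊕ Ω₂)((v₁,v₂),(w₁,w₂)) = Ω₁(v₁,w₁) + Ω₂(v₂,w₂). -/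

import Mathlib

/-- The identification of `V₁* × V₂*` with `(V₁ × V₂)*`:
`(α₁, α₂) ↦ ((w₁,w₂) ↦ α₁(w₁) + α₂(w₂))`. -/
def dualProd {V₁ V₂ : Type*} [AddCommGroup V₁] [Module ℝ V₁]
    [AddCommGroup V₂] [Module ℝ V₂]
    (α₁ : Module.Dual ℝ V₁) (α₂ : Module.Dual ℝ V₂) : Module.Dual ℝ (V₁ × V₂) :=
  α₁.comp (LinearMap.fst ℝ V₁ V₂) + α₂.comp (LinearMap.snd ℝ V₁ V₂)

/-- The Dirac sum `D₁ ⊕ D₂`. -/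
def diracSum {V₁ V₂ : Type*} [AddCommGroup V₁] [Module ℝ V₁]
    [AddCommGroup V₂] [Module ℝ V₂]
    (D₁ : Set (V₁ × Module.Dual ℝ V₁)) (D₂ : Set (V₂ × Module.Dual ℝ V₂)) :
    Set ((V₁ × V₂) × Module.Dual ℝ (V₁ × V₂)) :=
  {p | ∃ α₁ α₂, (p.1.1, α₁) ∈ D₁ ∧ (p.1.2, α₂) ∈ D₂ ∧ p.2 = dualProd α₁ α₂}

/-- The bowtie product `D_a ⋈ D_b`. -/
def bowtie {V : Type*} [AddCommGroup V] [Module ℝ V]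
    (Da Db : Set (V × Module.Dual ℝ V)) : Set (V × Module.Dual ℝ V) :=
  {p | ∃ β : Module.Dual ℝ V, (p.1, p.2 + β) ∈ Da ∧ (p.1, -β) ∈ Db}

/-- The Dirac structure `D(Δ,Ω)` on `V` induced from a subspace `Δ ⊆ V` and a
two-form `Ω`. -/
def inducedDirac {V : Type*} [AddCommGroup V] [Module ℝ V]
    (Δ : Submodule ℝ V) (Ω : V → V → ℝ) : Set (V × Module.Dual ℝ V) :=
  {p | p.1 ∈ Δ ∧ ∀ w ∈ Δ, p.2 w = Ω p.1 w}

/-!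
Both operations on induced structures are computed separately: `D(Δ₁,Ω₁) ⊕ D(Δ₂,Ω₂)` is
`D(Δ₁ × Δ₂, Ω₁ ⊕ Ω₂)`, and `D(Δ,Ω) ⋈ D(Δ',Ω')` is `D(Δ ∩ Δ', Ω + Ω')`. Since `Δ_c × Δ_c°` is
`D(Δ_c, 0)`, the theorem is their composite. In the bowtie formula, the covector `β` has prescribed
restrictions to `Δ` and to `Δ'`; it exists exactly when these agree on `Δ ∩ Δ'`.
-/

theorem exists_linearMap_eqOn_of_eqOn_inf {K V W : Type*} [DivisionRing K]
    [AddCommGroup V] [Module K V] [AddCommGroup W] [Module K W] {p q : Submodule K V}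
    {f g : V →ₗ[K] W} (hfg : ∀ w ∈ p ⊓ q, f w = g w) :
    ∃ h : V →ₗ[K] W, (∀ w ∈ p, h w = f w) ∧ ∀ w ∈ q, h w = g w := by
  have compatible : ∀ (x : (f.toPMap p).domain) (y : (g.toPMap q).domain),
      (x : V) = y → f.toPMap p x = g.toPMap q y := by
    rintro ⟨x, hxp⟩ ⟨_, hxq⟩ rfl
    exact hfg x ⟨hxp, hxq⟩
  obtain ⟨h, h_extends⟩ := ((f.toPMap p).sup (g.toPMap q) compatible).toFun.exists_extend
  refine ⟨h, fun w hw => ?_, fun w hw => ?_⟩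
  · exact (LinearMap.congr_fun h_extends ⟨w, Submodule.mem_sup_left hw⟩).trans
      (((f.toPMap p).left_le_sup _ compatible).2 (x := ⟨w, hw⟩) rfl).symm
  · exact (LinearMap.congr_fun h_extends ⟨w, Submodule.mem_sup_right hw⟩).trans
      (((f.toPMap p).right_le_sup _ compatible).2 (x := ⟨w, hw⟩) rfl).symm

theorem bowtie_inducedDirac {V : Type*} [AddCommGroup V] [Module ℝ V]
    (Δ Δ' : Submodule ℝ V) (Ω Ω' : V → Module.Dual ℝ V) :
    bowtie (inducedDirac Δ fun v w => Ω v w) (inducedDirac Δ' fun v w => Ω' v w) =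
      inducedDirac (Δ ⊓ Δ') fun v w => Ω v w + Ω' v w := by
  ext ⟨v, α⟩
  constructor
  · rintro ⟨β, ⟨hv, hαβ⟩, hv', hβ⟩
    refine ⟨⟨hv, hv'⟩, fun w ⟨hw, hw'⟩ => ?_⟩
    calc α w = (α + β) w + (-β) w := by simp
      _ = Ω v w + Ω' v w := congrArg₂ (· + ·) (hαβ w hw) (hβ w hw')
  · rintro ⟨⟨hv, hv'⟩, hα⟩
    have restrictions_agree : ∀ w ∈ Δ ⊓ Δ', (Ω v - α) w = (-Ω' v) w := fun w hw => by
      simp [show α w = Ω v w + Ω' v w from hα w hw]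
    obtain ⟨β, hβ, hβ'⟩ := exists_linearMap_eqOn_of_eqOn_inf restrictions_agree
    exact ⟨β, ⟨hv, fun w hw => by simp [hβ w hw]⟩, hv', fun w hw => by simp [hβ' w hw]⟩

section

variable {V₁ V₂ : Type*} [AddCommGroup V₁] [Module ℝ V₁] [AddCommGroup V₂] [Module ℝ V₂]

theorem dualProd_apply (α₁ : Module.Dual ℝ V₁) (α₂ : Module.Dual ℝ V₂) (w : V₁ × V₂) :
    dualProd α₁ α₂ w = α₁ w.1 + α₂ w.2 :=
  rfl

theorem dualProd_comp_inl_comp_inr (α : Module.Dual ℝ (V₁ × V₂)) :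
    dualProd (α.comp (LinearMap.inl ℝ V₁ V₂)) (α.comp (LinearMap.inr ℝ V₁ V₂)) = α :=
  α.coprod_comp_inl_inr

theorem diracSum_inducedDirac (Δ₁ : Submodule ℝ V₁) (Δ₂ : Submodule ℝ V₂)
    (Ω₁ : V₁ → Module.Dual ℝ V₁) (Ω₂ : V₂ → Module.Dual ℝ V₂) :
    diracSum (inducedDirac Δ₁ fun v w => Ω₁ v w) (inducedDirac Δ₂ fun v w => Ω₂ v w) =
      inducedDirac (Δ₁.prod Δ₂) fun v w => dualProd (Ω₁ v.1) (Ω₂ v.2) w := by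
  ext ⟨⟨v₁, v₂⟩, α⟩
  constructor
  · rintro ⟨α₁, α₂, ⟨hv₁, hα₁⟩, ⟨hv₂, hα₂⟩, rfl : α = dualProd α₁ α₂⟩
    exact ⟨⟨hv₁, hv₂⟩, fun w hw => congrArg₂ (· + ·) (hα₁ w.1 hw.1) (hα₂ w.2 hw.2)⟩
  · rintro ⟨⟨hv₁, hv₂⟩, hα⟩
    refine ⟨α.comp (LinearMap.inl ℝ V₁ V₂), α.comp (LinearMap.inr ℝ V₁ V₂),
      ⟨hv₁, fun w hw => ?_⟩, ⟨hv₂, fun w hw => ?_⟩, (dualProd_comp_inl_comp_inr α).symm⟩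
    · simpa [dualProd_apply] using hα (w, 0) ⟨hw, Δ₂.zero_mem⟩
    · simpa [dualProd_apply] using hα (0, w) ⟨Δ₁.zero_mem, hw⟩

theorem interconnection_of_induced_dirac_general (Δ₁ : Submodule ℝ V₁) (Δ₂ : Submodule ℝ V₂)
    (Ω₁ : V₁ → Module.Dual ℝ V₁) (Ω₂ : V₂ → Module.Dual ℝ V₂) (Δc : Submodule ℝ (V₁ × V₂)) :
    bowtie
        (diracSum (inducedDirac Δ₁ fun v w => Ω₁ v w) (inducedDirac Δ₂ fun v w => Ω₂ v w))
        {p : (V₁ × V₂) × Module.Dual ℝ (V₁ × V₂) | p.1 ∈ Δc ∧ ∀ w ∈ Δc, p.2 w = 0} =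
      inducedDirac (Δ₁.prod Δ₂ ⊓ Δc) fun v w => Ω₁ v.1 w.1 + Ω₂ v.2 w.2 := by
  have interconnection_eq : {p : (V₁ × V₂) × Module.Dual ℝ (V₁ × V₂) |
      p.1 ∈ Δc ∧ ∀ w ∈ Δc, p.2 w = 0} =
        inducedDirac Δc fun v w => (0 : V₁ × V₂ → Module.Dual ℝ (V₁ × V₂)) v w := rfl
  rw [interconnection_eq, diracSum_inducedDirac,
    bowtie_inducedDirac _ _ fun v => dualProd (Ω₁ v.1) (Ω₂ v.2)]
  simp only [dualProd_apply, Pi.zero_apply, LinearMap.zero_apply, add_zero]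

end

/-- The interconnection of the induced Dirac structures `D(Δ₁,Ω₁)` and
`D(Δ₂,Ω₂)` through the interconnection Dirac structure
`D_int = Δ_c × Δ_c°` satisfies
`(D(Δ₁,Ω₁) ⊕ D(Δ₂,Ω₂)) ⋈ D_int = D((Δ₁ × Δ₂) ∩ Δ_c, Ω₁ ⊕ Ω₂)`. -/
theorem interconnection_of_induced_dirac
    {V₁ V₂ : Type*} [AddCommGroup V₁] [Module ℝ V₁] [FiniteDimensional ℝ V₁]
    [AddCommGroup V₂] [Module ℝ V₂] [FiniteDimensional ℝ V₂]
    (Δ₁ : Submodule ℝ V₁) (Δ₂ : Submodule ℝ V₂)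
    (Ω₁ : V₁ →ₗ[ℝ] V₁ →ₗ[ℝ] ℝ) (Ω₂ : V₂ →ₗ[ℝ] V₂ →ₗ[ℝ] ℝ)
    (hΩ₁ : ∀ v w, Ω₁ v w = - Ω₁ w v) (hΩ₂ : ∀ v w, Ω₂ v w = - Ω₂ w v)
    (Δc : Submodule ℝ (V₁ × V₂)) :
    bowtie
        (diracSum (inducedDirac Δ₁ fun v w => Ω₁ v w)
          (inducedDirac Δ₂ fun v w => Ω₂ v w))
        {p : (V₁ × V₂) × Module.Dual ℝ (V₁ × V₂) |
          p.1 ∈ Δc ∧ ∀ w ∈ Δc, p.2 w = 0}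
      = inducedDirac (Δ₁.prod Δ₂ ⊓ Δc)
          (fun v w => Ω₁ v.1 w.1 + Ω₂ v.2 w.2) :=
  interconnection_of_induced_dirac_general Δ₁ Δ₂ Ω₁ Ω₂ Δc
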